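/- Let ψ be a unit vector in C^d with all components nonzero and let 0 < p < d/(d+1). Then the maximal reliability over all 0 ≤ E ≤ I of R_{ψ,p}(E) = p⟨ψ|diag E|ψ⟩ + (1−p)⟨ψ|(I−E)|ψ⟩ equals p(1 + f_ψ^{-1}(p/(1−p))), where f_ψ(z) = ∑_k |ψ_k|²/(z+|ψ_k|²). -/

import Mathlib

open Matrix
open scoped ComplexOrder

section
open scoped MatrixOrder Matrix.Norms.L2Operator
lemma exists_factor (d : ℕ) (F : Matrix (Fin d) (Fin d) ℂ) (hF : F.PosSemidef) :
    ∃ B : Matrix (Fin d) (Fin d) ℂ, F = Bᴴ * B :=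
  CStarAlgebra.nonneg_iff_eq_star_mul_self.mp hF.nonneg
end

/-- reliability in terms of `F = 1 - E`. -/
lemma rel_formula (d : ℕ) (ψ : Fin d → ℂ) (hψ : ∑ k, ‖ψ k‖ ^ 2 = 1) (p : ℝ)
    (F E : Matrix (Fin d) (Fin d) ℂ) (hE : E = 1 - F) :
    ((p : ℂ) * (star ψ ⬝ᵥ (Matrix.diagonal (fun k => E k k) *ᵥ ψ)) +
          ((1 : ℂ) - (p : ℂ)) * (star ψ ⬝ᵥ ((1 - E) *ᵥ ψ))).re
      = p - p * ∑ k, ‖ψ k‖ ^ 2 * (F k k).re + (1 - p) * (star ψ ⬝ᵥ (F *ᵥ ψ)).re := by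
  subst hE
  have h1 : (star ψ ⬝ᵥ (Matrix.diagonal (fun k => (1 - F) k k) *ᵥ ψ)).re
      = 1 - ∑ k, ‖ψ k‖ ^ 2 * (F k k).re := by
    rw [← hψ, ← Finset.sum_sub_distrib]
    simp only [dotProduct, Complex.re_sum]
    refine Finset.sum_congr rfl fun k _ => ?_
    rw [mulVec_diagonal, ← Complex.normSq_eq_norm_sq, Complex.normSq_apply]
    simp
    ring
  rw [sub_sub_cancel]
  have h2 : ((1 : ℂ) - (p : ℂ)) = ((1 - p : ℝ) : ℂ) := by push_cast; rfl
  rw [h2, Complex.add_re, Complex.re_ofReal_mul, Complex.re_ofReal_mul, h1]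
  ring

lemma key_ineq (d : ℕ) (ψ : Fin d → ℂ) (hψk : ∀ k, ψ k ≠ 0) (z N Y : ℝ) (hz : 0 ≤ z)
    (hN : N = ∑ k, ‖ψ k‖ ^ 2 / (z + ‖ψ k‖ ^ 2) ^ 2) (hNpos : 0 < N)
    (hY : Y = ∑ k, (‖ψ k‖ ^ 2 / (z + ‖ψ k‖ ^ 2)) ^ 2) (y : Fin d → ℂ) :
    ‖∑ k, y k * ψ k‖ ^ 2 ≤
      (z / N * ‖∑ k, y k * (ψ k / ((z + ‖ψ k‖ ^ 2 : ℝ) : ℂ))‖ ^ 2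
        + ∑ k, ‖ψ k‖ ^ 2 * ‖y k‖ ^ 2) * (z * N + Y) := by
  have hpos : ∀ k, 0 < z + ‖ψ k‖ ^ 2 := fun k => by
    have := norm_pos_iff.2 (hψk k); positivity
  set s := ∑ k, y k * (ψ k / ((z + ‖ψ k‖ ^ 2 : ℝ) : ℂ)) with hs
  set T : ℝ := ∑ k, (‖ψ k‖ * ‖y k‖) * (‖ψ k‖ ^ 2 / (z + ‖ψ k‖ ^ 2)) with hT
  set X : ℝ := ∑ k, ‖ψ k‖ ^ 2 * ‖y k‖ ^ 2 with hX
  have hdec : ∑ k, y k * ψ k = (z : ℂ) * s +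
      ∑ k, y k * ψ k * ((‖ψ k‖ ^ 2 / (z + ‖ψ k‖ ^ 2) : ℝ) : ℂ) := by
    rw [hs, Finset.mul_sum, ← Finset.sum_add_distrib]
    refine Finset.sum_congr rfl fun k _ => ?_
    have h0 : ((z + ‖ψ k‖ ^ 2 : ℝ) : ℂ) ≠ 0 := by exact_mod_cast (hpos k).ne'
    rw [Complex.ofReal_div]
    field_simp
    push_cast
    ring
  have hle : ‖∑ k, y k * ψ k‖ ≤ z * ‖s‖ + T := by
    rw [hdec]
    refine (norm_add_le _ _).trans (add_le_add ?_ ?_)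
    · rw [norm_mul, Complex.norm_real, Real.norm_of_nonneg hz]
    · refine (norm_sum_le _ _).trans (Finset.sum_le_sum fun k _ => ?_)
      rw [norm_mul, norm_mul, Complex.norm_real, Real.norm_of_nonneg
        (div_nonneg (by positivity) (hpos k).le), mul_comm ‖y k‖]
  have hCS : T ^ 2 ≤ X * Y := by
    rw [hT, hX, hY]
    refine (Finset.sum_mul_sq_le_sq_mul_sq _ _ _).trans (le_of_eq ?_)
    simp only [mul_pow]
  have hX0 : 0 ≤ X := Finset.sum_nonneg fun k _ => by positivity
  have hY0 : 0 ≤ Y := hY ▸ Finset.sum_nonneg fun k _ => by positivity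
  have hT0 : 0 ≤ T := Finset.sum_nonneg fun k _ => by have := hpos k; positivity
  have hσ : 0 ≤ ‖s‖ := norm_nonneg _
  generalize ‖s‖ = σ at *
  have hcross : 2 * (σ * T) ≤ σ ^ 2 * Y / N + X * N := by
    refine le_of_sq_le_sq ?_ (by positivity)
    have h3 : σ ^ 2 * Y / N * (X * N) = σ ^ 2 * (X * Y) := by field_simp
    have h4 : σ ^ 2 * T ^ 2 ≤ σ ^ 2 * (X * Y) := by gcongr
    nlinarith [sq_nonneg (σ ^ 2 * Y / N - X * N)]
  calc ‖∑ k, y k * ψ k‖ ^ 2 ≤ (z * σ + T) ^ 2 := by gcongr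
    _ = z ^ 2 * σ ^ 2 + z * (2 * (σ * T)) + T ^ 2 := by ring
    _ ≤ z ^ 2 * σ ^ 2 + z * (σ ^ 2 * Y / N + X * N) + X * Y := by gcongr
    _ = _ := by field_simp; ring

/-- maximal reliability for known ψ and p < d/(d+1). -/
theorem stmt_7 (d : ℕ) (hd : 2 ≤ d) (ψ : Fin d → ℂ)
    (hψ : ∑ k, ‖ψ k‖ ^ 2 = 1) (hψk : ∀ k, ψ k ≠ 0)
    (p : ℝ) (hp0 : 0 < p) (hp1 : p < d / (d + 1))
    (z : ℝ) (hz : 0 ≤ z)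
    (hfz : ∑ k, ‖ψ k‖ ^ 2 / (z + ‖ψ k‖ ^ 2) = p / (1 - p)) :
    sSup {r : ℝ | ∃ E : Matrix (Fin d) (Fin d) ℂ, E.PosSemidef ∧ (1 - E).PosSemidef ∧
        r = ((p : ℂ) * (star ψ ⬝ᵥ (Matrix.diagonal (fun k => E k k) *ᵥ ψ)) +
          ((1 : ℂ) - (p : ℂ)) * (star ψ ⬝ᵥ ((1 - E) *ᵥ ψ))).re} = p * (1 + z) := by
  have hp : 0 < 1 - p := by
    have : (d : ℝ) / (d + 1) < 1 := by rw [div_lt_one (by positivity)]; linarith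
    linarith
  have hpos : ∀ k, 0 < z + ‖ψ k‖ ^ 2 := fun k => by
    have := norm_pos_iff.2 (hψk k); positivity
  obtain ⟨N, hN⟩ : ∃ N, N = ∑ k, ‖ψ k‖ ^ 2 / (z + ‖ψ k‖ ^ 2) ^ 2 := ⟨_, rfl⟩
  obtain ⟨Y, hY⟩ : ∃ Y, Y = ∑ k, (‖ψ k‖ ^ 2 / (z + ‖ψ k‖ ^ 2)) ^ 2 := ⟨_, rfl⟩
  have hNpos : 0 < N := by
    rw [hN]
    refine Finset.sum_pos (fun k _ => ?_) ⟨⟨0, by omega⟩, Finset.mem_univ _⟩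
    have := norm_pos_iff.2 (hψk k)
    have := hpos k
    positivity
  have hg : z * N + Y = p / (1 - p) := by
    rw [← hfz, hN, hY, Finset.mul_sum, ← Finset.sum_add_distrib]
    refine Finset.sum_congr rfl fun k _ => ?_
    have := hpos k
    field_simp
  obtain ⟨φ, hφ⟩ : ∃ φ : Fin d → ℂ, φ = fun k => ψ k / ((z + ‖ψ k‖ ^ 2 : ℝ) : ℂ) := ⟨_, rfl⟩
  have hφn : ∀ k, ‖φ k‖ ^ 2 = ‖ψ k‖ ^ 2 / (z + ‖ψ k‖ ^ 2) ^ 2 := fun k => by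
    rw [hφ]; simp only []
    rw [norm_div, Complex.norm_real, Real.norm_of_nonneg (hpos k).le, div_pow]
  have hφN : star φ ⬝ᵥ φ = (N : ℂ) := by
    rw [hN]; push_cast
    refine Finset.sum_congr rfl fun k _ => ?_
    have := congrArg (fun x : ℝ => (x : ℂ)) (hφn k)
    push_cast at this
    rw [← this, Pi.star_apply, Complex.star_def, Complex.conj_mul']
  have hφψ : star φ ⬝ᵥ ψ = ((p / (1 - p) : ℝ) : ℂ) := by
    rw [← hfz]; rw [Complex.ofReal_sum]
    refine Finset.sum_congr rfl fun k _ => ?_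
    rw [Pi.star_apply, hφ]
    simp only []
    rw [star_div₀, Complex.star_def, Complex.conj_ofReal, div_mul_eq_mul_div, Complex.conj_mul']
    push_cast
    rfl
  have hNC : (N : ℂ) ≠ 0 := by exact_mod_cast hNpos.ne'
  refine IsGreatest.csSup_eq ⟨?_, ?_⟩
  · obtain ⟨F, hF⟩ : ∃ F : Matrix (Fin d) (Fin d) ℂ,
      F = ((N⁻¹ : ℝ) : ℂ) • vecMulVec φ (star φ) := ⟨_, rfl⟩
    have hFH : Fᴴ = F := by
      rw [hF, conjTranspose_smul, conjTranspose_vecMulVec, star_star, Complex.star_def,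
        Complex.conj_ofReal]
    have hFF : F * F = F := by
      rw [hF, smul_mul_smul_comm, vecMulVec_mul_vecMulVec, hφN, vecMulVec_smul, smul_smul]
      congr 1
      push_cast
      field_simp
    have hFP : F.PosSemidef := by
      have := posSemidef_conjTranspose_mul_self F
      rwa [hFH, hFF] at this
    have hEP : (1 - F).PosSemidef := by
      have := posSemidef_conjTranspose_mul_self (1 - F)
      rw [conjTranspose_sub, hFH, conjTranspose_one] at this
      have h : (1 - F) * (1 - F) = 1 - F := by
        rw [mul_sub, sub_mul, sub_mul, hFF]; simp
      rwa [h] at this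
    refine ⟨1 - F, hEP, by simpa using hFP, ?_⟩
    rw [rel_formula d ψ hψ p F (1 - F) rfl]
    have e1 : ∑ k, ‖ψ k‖ ^ 2 * (F k k).re = Y / N := by
      rw [hY, Finset.sum_div]
      refine Finset.sum_congr rfl fun k _ => ?_
      have : F k k = ((N⁻¹ * ‖φ k‖ ^ 2 : ℝ) : ℂ) := by
        rw [hF]
        simp [vecMulVec_apply, Complex.mul_conj']
      rw [this, Complex.ofReal_re, hφn]
      have := hpos k
      field_simp
    have e2 : (star ψ ⬝ᵥ (F *ᵥ ψ)).re = (p / (1 - p)) ^ 2 / N := by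
      have h5 : star ψ ⬝ᵥ φ = ((p / (1 - p) : ℝ) : ℂ) := by
        have := congrArg star hφψ
        rw [star_dotProduct, star_star] at this
        rw [this, Complex.star_def, Complex.conj_ofReal]
      have : star ψ ⬝ᵥ (F *ᵥ ψ) = (((p / (1 - p)) ^ 2 / N : ℝ) : ℂ) := by
        rw [hF, smul_mulVec, vecMulVec_mulVec, hφψ, dotProduct_smul, dotProduct_smul, h5]
        simp
        ring
      rw [this, Complex.ofReal_re]
    rw [e1, e2]
    have hY' : Y = p / (1 - p) - z * N := by linarith
    rw [hY']
    field_simp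
    ring
  · rintro r ⟨E, hE, hF, rfl⟩
    rw [rel_formula d ψ hψ p (1 - E) E (by simp)]
    obtain ⟨F, hFE⟩ : ∃ F, F = 1 - E := ⟨_, rfl⟩
    rw [← hFE] at hF ⊢
    have hE' : E = 1 - F := by rw [hFE]; simp
    obtain ⟨B, hB⟩ := exists_factor d F hF
    have quad : ∀ x : Fin d → ℂ, (star x ⬝ᵥ (F *ᵥ x)).re = ∑ j, ‖∑ k, B j k * x k‖ ^ 2 := by
      intro x
      rw [hB, ← mulVec_mulVec, dotProduct_mulVec, vecMul_conjTranspose, star_star]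
      simp only [dotProduct, Complex.re_sum]
      refine Finset.sum_congr rfl fun j _ => ?_
      rw [Pi.star_apply, Complex.star_def, Complex.conj_mul']
      norm_cast
    have diag : ∀ k, (F k k).re = ∑ j, ‖B j k‖ ^ 2 := by
      intro k
      rw [hB]
      simp only [mul_apply, conjTranspose_apply, Complex.re_sum]
      refine Finset.sum_congr rfl fun j _ => ?_
      rw [Complex.star_def, Complex.conj_mul']
      norm_cast
    have hbd : (star φ ⬝ᵥ (F *ᵥ φ)).re ≤ N := by
      have h := hE.re_dotProduct_nonneg φ
      rw [hE', sub_mulVec, one_mulVec, dotProduct_sub, hφN] at h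
      simpa using h
    have hmain : (star ψ ⬝ᵥ (F *ᵥ ψ)).re ≤
        (z / N * (star φ ⬝ᵥ (F *ᵥ φ)).re + ∑ k, ‖ψ k‖ ^ 2 * (F k k).re) * (p / (1 - p)) := by
      have e : ∑ k, ‖ψ k‖ ^ 2 * (F k k).re = ∑ j, ∑ k, ‖ψ k‖ ^ 2 * ‖B j k‖ ^ 2 := by
        rw [Finset.sum_comm]
        refine Finset.sum_congr rfl fun k _ => ?_
        rw [diag, Finset.mul_sum]
      rw [quad, quad, e, ← hg, Finset.mul_sum, ← Finset.sum_add_distrib, Finset.sum_mul]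
      refine Finset.sum_le_sum fun j _ => ?_
      rw [hφ]
      exact key_ineq d ψ hψk z N Y hz hN hNpos hY (B j)
    have h6 : z / N * (star φ ⬝ᵥ (F *ᵥ φ)).re ≤ z := by
      calc _ ≤ z / N * N := by gcongr
        _ = z := by field_simp
    generalize (star φ ⬝ᵥ (F *ᵥ φ)).re = a at *
    generalize (star ψ ⬝ᵥ (F *ᵥ ψ)).re = b at *
    generalize ∑ k, ‖ψ k‖ ^ 2 * (F k k).re = c at *
    have h7 : (1 - p) * b ≤ p * (z / N * a + c) := by
      calc (1 - p) * b ≤ (1 - p) * ((z / N * a + c) * (p / (1 - p))) := by gcongr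
        _ = _ := by field_simp
    nlinarith
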